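/- Let K and C be convex bodies in ℝⁿ and suppose vol(K ∩ (x + C)) = vol(K ∩ C) for all x in a segment [0, v]. If additionally each intersection K ∩ (x + C) is nonempty with positive volume for x ∈ [0,v], then K ∩ (x + C) = (K ∩ C) + x' for some translation x' depending affinely on x; in particular all the intersections K ∩ (tv + C), t ∈ [0,1], are translates of one another. -/

import Mathlib

open MeasureTheory Set
open scoped Pointwise

/-- The quantile function of a continuous positive density on a bounded interval. -/
theorem exists_quantile {a b : ℝ} {f : ℝ → ℝ} (hab : a < b) (hf : ContinuousOn f (Ioo a b))
    (hpos : ∀ s ∈ Ioo a b, 0 < f s) (hint : Integrable f) :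
    ∃ z : ℝ → ℝ, (∀ τ ∈ Ioo (0 : ℝ) 1, z τ ∈ Ioo a b) ∧ SurjOn z (Ioo 0 1) (Ioo a b) ∧
      ∀ τ ∈ Ioo (0 : ℝ) 1, HasDerivAt z ((∫ s in Ioo a b, f s) / f (z τ)) τ := by
  set α := ∫ s in Ioo a b, f s with hα
  have hαpos : 0 < α := by
    rw [hα, ← integral_Ioc_eq_integral_Ioo, ← intervalIntegral.integral_of_le hab.le]
    exact intervalIntegral.intervalIntegral_pos_of_pos_on hint.intervalIntegrable
      (fun x hx => hpos x hx) hab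
  set F : ℝ → ℝ := fun s => α⁻¹ * ∫ x in a..s, f x with hF
  have hFd : ∀ s ∈ Ioo a b, HasDerivAt F (α⁻¹ * f s) s := fun s hs =>
    (intervalIntegral.integral_hasDerivAt_right hint.intervalIntegrable
      (hf.stronglyMeasurableAtFilter isOpen_Ioo s hs)
      (hf.continuousAt (isOpen_Ioo.mem_nhds hs))).const_mul _
  have hFc : ContinuousOn F (Icc a b) := by
    rw [← uIcc_of_le hab.le]
    exact continuousOn_const.mul
      (intervalIntegral.continuousOn_primitive_interval hint.integrableOn)
  have hFm : StrictMonoOn F (Icc a b) := by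
    refine strictMonoOn_of_deriv_pos (convex_Icc a b) hFc fun s hs => ?_
    rw [interior_Icc] at hs
    rw [(hFd s hs).deriv]
    exact mul_pos (inv_pos.2 hαpos) (hpos s hs)
  have hFa : F a = 0 := by simp [hF]
  have hFb : F b = 1 := by
    simp only [hF]
    rw [intervalIntegral.integral_of_le hab.le, integral_Ioc_eq_integral_Ioo]
    exact inv_mul_cancel₀ hαpos.ne'
  have hsurj : SurjOn F (Ioo a b) (Ioo 0 1) := by
    have := intermediate_value_Ioo hab.le hFc
    rwa [hFa, hFb] at this
  have hmaps : MapsTo F (Ioo a b) (Ioo 0 1) := fun s hs => by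
    have h1 := hFm (left_mem_Icc.2 hab.le) (Ioo_subset_Icc_self hs) hs.1
    have h2 := hFm (Ioo_subset_Icc_self hs) (right_mem_Icc.2 hab.le) hs.2
    rw [hFa] at h1
    rw [hFb] at h2
    exact ⟨h1, h2⟩
  have hinj : InjOn F (Ioo a b) := hFm.injOn.mono Ioo_subset_Icc_self
  set z := Function.invFunOn F (Ioo a b)
  have hzmem : ∀ τ ∈ Ioo (0 : ℝ) 1, z τ ∈ Ioo a b := fun τ hτ => Function.invFunOn_mem (hsurj hτ)
  have hFz : ∀ τ ∈ Ioo (0 : ℝ) 1, F (z τ) = τ := fun τ hτ => Function.invFunOn_eq (hsurj hτ)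
  have hzF : ∀ s ∈ Ioo a b, z (F s) = s := fun s hs => hinj.leftInvOn_invFunOn hs
  have hzs : SurjOn z (Ioo 0 1) (Ioo a b) := fun s hs => ⟨F s, hmaps hs, hzF s hs⟩
  have hzm : StrictMonoOn z (Ioo 0 1) := fun x hx y hy hxy => by
    rw [← hFm.lt_iff_lt (Ioo_subset_Icc_self (hzmem x hx)) (Ioo_subset_Icc_self (hzmem y hy)),
      hFz x hx, hFz y hy]
    exact hxy
  refine ⟨z, hzmem, hzs, fun τ hτ => ?_⟩
  have hc : ContinuousAt z τ := hzm.continuousAt_of_image_mem_nhds (isOpen_Ioo.mem_nhds hτ)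
    (Filter.mem_of_superset (isOpen_Ioo.mem_nhds (hzmem τ hτ)) hzs)
  have hfz := hpos _ (hzmem τ hτ)
  have := HasDerivAt.of_local_left_inverse hc (hFd _ (hzmem τ hτ)) (by positivity)
    (Filter.eventually_of_mem (isOpen_Ioo.mem_nhds hτ) hFz)
  rwa [mul_inv, inv_inv, ← div_eq_mul_inv] at this

/-- Weighted arithmetic–geometric mean inequality in the form used for transport of densities. -/
theorem rpow_mul_rpow_le_transport {l α β x y : ℝ} (hl : l ∈ Ioo (0 : ℝ) 1) (hα : 0 ≤ α)
    (hβ : 0 ≤ β) (hx : 0 < x) (hy : 0 < y) :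
    α ^ (1 - l) * β ^ l ≤ ((1 - l) * (α / x) + l * (β / y)) * (x ^ (1 - l) * y ^ l) := by
  have h := Real.geom_mean_le_arith_mean2_weighted (sub_nonneg.2 hl.2.le) hl.1.le
    (div_nonneg hα hx.le) (div_nonneg hβ hy.le) (sub_add_cancel 1 l)
  rw [Real.div_rpow hα hx.le, Real.div_rpow hβ hy.le, div_mul_div_comm] at h
  exact (div_le_iff₀ (by positivity)).1 h

theorem eq_of_transport_eq {l α x y : ℝ} (hl : l ∈ Ioo (0 : ℝ) 1) (hα : 0 < α)
    (hx : 0 < x) (hy : 0 < y)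
    (h : ((1 - l) * (α / x) + l * (α / y)) * (x ^ (1 - l) * y ^ l) = α ^ (1 - l) * α ^ l) :
    x = y := by
  have h2 : (α / x) ^ (1 - l) * (α / y) ^ l = (1 - l) * (α / x) + l * (α / y) := by
    rw [Real.div_rpow hα.le hx.le, Real.div_rpow hα.le hy.le, div_mul_div_comm, ← h]
    exact mul_div_cancel_right₀ _ (by positivity)
  have h3 := (Real.geom_mean_eq_arith_mean2_weighted_iff_of_pos (sub_pos.2 hl.2) hl.1
    (div_nonneg hα.le hx.le) (div_nonneg hα.le hy.le) (sub_add_cancel 1 l)).1 h2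
  field_simp at h3
  exact h3.symm

/-- One-dimensional Prékopa–Leindler inequality for continuous positive densities on bounded
intervals, with its equality case. -/
theorem prekopa_leindler_Ioo {a b c d l : ℝ} {f g h : ℝ → ℝ} (hl : l ∈ Ioo (0 : ℝ) 1)
    (hab : a < b) (hcd : c < d)
    (hf : ContinuousOn f (Ioo a b)) (hfpos : ∀ s ∈ Ioo a b, 0 < f s) (hfint : Integrable f)
    (hg : ContinuousOn g (Ioo c d)) (hgpos : ∀ s ∈ Ioo c d, 0 < g s) (hgint : Integrable g)
    (hh : ∀ s, 0 ≤ h s) (hhint : Integrable h)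
    (hfgh : ∀ s ∈ Ioo a b, ∀ t ∈ Ioo c d,
      f s ^ (1 - l) * g t ^ l ≤ h ((1 - l) * s + l * t)) :
    (∫ s in Ioo a b, f s) ^ (1 - l) * (∫ s in Ioo c d, g s) ^ l ≤ ∫ s, h s ∧
    (∫ s in Ioo c d, g s = ∫ s in Ioo a b, f s → ∫ s, h s ≤ ∫ s in Ioo a b, f s →
      ∃ k, Ioo c d = (fun s => s + k) '' Ioo a b ∧ ∀ s ∈ Ioo a b, g (s + k) = f s) := by
  obtain ⟨z₁, hz₁, hs₁, hd₁⟩ := exists_quantile hab hf hfpos hfint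
  obtain ⟨z₂, hz₂, hs₂, hd₂⟩ := exists_quantile hcd hg hgpos hgint
  have hαpos : 0 < ∫ s in Ioo a b, f s := by
    rw [← integral_Ioc_eq_integral_Ioo, ← intervalIntegral.integral_of_le hab.le]
    exact intervalIntegral.intervalIntegral_pos_of_pos_on hfint.intervalIntegrable
      (fun x hx => hfpos x hx) hab
  have hβpos : 0 < ∫ s in Ioo c d, g s := by
    rw [← integral_Ioc_eq_integral_Ioo, ← intervalIntegral.integral_of_le hcd.le]
    exact intervalIntegral.intervalIntegral_pos_of_pos_on hgint.intervalIntegrable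
      (fun x hx => hgpos x hx) hcd
  set α := ∫ s in Ioo a b, f s
  set β := ∫ s in Ioo c d, g s
  set z : ℝ → ℝ := fun τ => (1 - l) * z₁ τ + l * z₂ τ with hz
  set D : ℝ → ℝ := fun τ => (1 - l) * (α / f (z₁ τ)) + l * (β / g (z₂ τ)) with hD
  have hl1 : 0 < 1 - l := sub_pos.2 hl.2
  have hl0 : 0 < l := hl.1
  have hDpos : ∀ τ ∈ Ioo (0 : ℝ) 1, 0 < D τ := fun τ hτ => by
    have := hfpos _ (hz₁ τ hτ)
    have := hgpos _ (hz₂ τ hτ)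
    positivity
  have hzd : ∀ τ ∈ Ioo (0 : ℝ) 1, HasDerivAt z (D τ) τ := fun τ hτ =>
    ((hd₁ τ hτ).const_mul _).add ((hd₂ τ hτ).const_mul _)
  have hzm : StrictMonoOn z (Ioo 0 1) := by
    refine strictMonoOn_of_deriv_pos (convex_Ioo 0 1)
      (fun τ hτ => (hzd τ hτ).continuousAt.continuousWithinAt) fun τ hτ => ?_
    rw [interior_Ioo] at hτ
    rw [(hzd τ hτ).deriv]
    exact hDpos τ hτ
  have hzd' : ∀ τ ∈ Ioo (0 : ℝ) 1, HasDerivWithinAt z (D τ) (Ioo 0 1) τ :=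
    fun τ hτ => (hzd τ hτ).hasDerivWithinAt
  have hle : ∀ τ ∈ Ioo (0 : ℝ) 1, α ^ (1 - l) * β ^ l ≤
      D τ * (f (z₁ τ) ^ (1 - l) * g (z₂ τ) ^ l) := fun τ hτ =>
    rpow_mul_rpow_le_transport hl hαpos.le hβpos.le (hfpos _ (hz₁ τ hτ)) (hgpos _ (hz₂ τ hτ))
  have hle' : ∀ τ ∈ Ioo (0 : ℝ) 1, D τ * (f (z₁ τ) ^ (1 - l) * g (z₂ τ) ^ l) ≤
      |D τ| • h (z τ) := fun τ hτ => by
    rw [abs_of_pos (hDpos τ hτ), smul_eq_mul]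
    exact mul_le_mul_of_nonneg_left (hfgh _ (hz₁ τ hτ) _ (hz₂ τ hτ)) (hDpos τ hτ).le
  have hint : IntegrableOn (fun τ => |D τ| • h (z τ)) (Ioo 0 1) :=
    (integrableOn_image_iff_integrableOn_abs_deriv_smul measurableSet_Ioo hzd' hzm.injOn h).1
      hhint.integrableOn
  have hcv := integral_image_eq_integral_abs_deriv_smul measurableSet_Ioo hzd' hzm.injOn h
  have hub : ∫ τ in Ioo (0 : ℝ) 1, |D τ| • h (z τ) ≤ ∫ s, h s := by
    rw [← hcv]
    exact setIntegral_le_integral hhint (Filter.Eventually.of_forall hh)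
  have hconst : ∫ _ in Ioo (0 : ℝ) 1, α ^ (1 - l) * β ^ l = α ^ (1 - l) * β ^ l := by simp
  have hcint : IntegrableOn (fun _ : ℝ => α ^ (1 - l) * β ^ l) (Ioo 0 1) :=
    integrableOn_const (by simp)
  refine ⟨?_, fun hβα hhα => ?_⟩
  · rw [← hconst]
    exact (setIntegral_mono_on hcint hint measurableSet_Ioo
      fun τ hτ => (hle τ hτ).trans (hle' τ hτ)).trans hub
  have hα1 : α ^ (1 - l) * α ^ l = α := by
    rw [← Real.rpow_add hαpos, sub_add_cancel, Real.rpow_one]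
  have hae : (fun τ => D τ * (f (z₁ τ) ^ (1 - l) * g (z₂ τ) ^ l))
      =ᵐ[volume.restrict (Ioo 0 1)] fun _ => α ^ (1 - l) * β ^ l := by
    have hnn : 0 ≤ᵐ[volume.restrict (Ioo (0 : ℝ) 1)]
        fun τ => |D τ| • h (z τ) - α ^ (1 - l) * β ^ l := by
      filter_upwards [ae_restrict_mem measurableSet_Ioo] with τ hτ
      exact sub_nonneg.2 ((hle τ hτ).trans (hle' τ hτ))
    have h0 : ∫ τ in Ioo (0 : ℝ) 1, (|D τ| • h (z τ) - α ^ (1 - l) * β ^ l) = 0 := by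
      refine le_antisymm ?_ (integral_nonneg_of_ae hnn)
      rw [integral_sub hint hcint, hconst, hβα, hα1]
      linarith
    filter_upwards [(integral_eq_zero_iff_of_nonneg_ae hnn (hint.sub hcint)).1 h0,
      ae_restrict_mem measurableSet_Ioo] with τ hτ hmem
    have := hle τ hmem
    have := hle' τ hmem
    simp only [Pi.zero_apply] at hτ
    linarith
  have hfc : ContinuousOn (fun τ => f (z₁ τ)) (Ioo 0 1) :=
    hf.comp (fun τ hτ => (hd₁ τ hτ).continuousAt.continuousWithinAt) hz₁
  have hgc : ContinuousOn (fun τ => g (z₂ τ)) (Ioo 0 1) :=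
    hg.comp (fun τ hτ => (hd₂ τ hτ).continuousAt.continuousWithinAt) hz₂
  have hDc : ContinuousOn D (Ioo 0 1) :=
    (continuousOn_const.mul (continuousOn_const.div hfc fun τ hτ => (hfpos _ (hz₁ τ hτ)).ne')).add
      (continuousOn_const.mul (continuousOn_const.div hgc fun τ hτ => (hgpos _ (hz₂ τ hτ)).ne'))
  have heq := Measure.eqOn_open_of_ae_eq hae isOpen_Ioo
    (hDc.mul ((hfc.rpow_const fun τ _ => Or.inr hl1.le).mul
      (hgc.rpow_const fun τ _ => Or.inr hl0.le))) continuousOn_const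
  have hfg : ∀ τ ∈ Ioo (0 : ℝ) 1, f (z₁ τ) = g (z₂ τ) := fun τ hτ => by
    have := heq hτ
    simp only [hD, hβα] at this
    exact eq_of_transport_eq hl hαpos (hfpos _ (hz₁ τ hτ)) (hgpos _ (hz₂ τ hτ)) this
  have hdiff : ∀ τ ∈ Ioo (0 : ℝ) 1, HasDerivAt (fun τ => z₂ τ - z₁ τ) 0 τ := fun τ hτ => by
    have := (hd₂ τ hτ).sub (hd₁ τ hτ)
    rw [hfg τ hτ, hβα, sub_self] at this
    exact this
  have hhalf : (1 / 2 : ℝ) ∈ Ioo (0 : ℝ) 1 := by norm_num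
  have hk : ∀ τ ∈ Ioo (0 : ℝ) 1, z₂ τ = z₁ τ + (z₂ (1 / 2) - z₁ (1 / 2)) := fun τ hτ => by
    have := isOpen_Ioo.is_const_of_deriv_eq_zero isPreconnected_Ioo
      (fun τ hτ => (hdiff τ hτ).differentiableAt.differentiableWithinAt)
      (fun τ hτ => (hdiff τ hτ).deriv) hτ hhalf
    linarith
  refine ⟨z₂ (1 / 2) - z₁ (1 / 2), Subset.antisymm ?_ ?_, ?_⟩
  · intro t ht
    obtain ⟨τ, hτ, rfl⟩ := hs₂ ht
    exact ⟨z₁ τ, hz₁ τ hτ, (hk τ hτ).symm⟩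
  · rintro _ ⟨s, hs, rfl⟩
    obtain ⟨τ, hτ, rfl⟩ := hs₁ hs
    simp only [← hk τ hτ]
    exact hz₂ τ hτ
  · intro s hs
    obtain ⟨τ, hτ, rfl⟩ := hs₁ hs
    rw [← hk τ hτ, hfg τ hτ]

/-- The multiplicative Brunn–Minkowski inequality on compact convex sets. -/
def MulBrunnMinkowski {E : Type*} [AddCommGroup E] [Module ℝ E] [TopologicalSpace E]
    [MeasurableSpace E] (μ : Measure E) : Prop :=
  ∀ ⦃P Q : Set E⦄, IsCompact P → Convex ℝ P → IsCompact Q → Convex ℝ Q → ∀ l ∈ Ioo (0 : ℝ) 1,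
    μ.real P ^ (1 - l) * μ.real Q ^ l ≤ μ.real ((1 - l) • P + l • Q)

section Slices

theorem IsCompact.prodMk_preimage {F : Type*} [TopologicalSpace F] {A : Set (ℝ × F)}
    (hA : IsCompact A) (s : ℝ) :
    IsCompact (Prod.mk s ⁻¹' A) := by
  have : Prod.mk s ⁻¹' A = Prod.snd '' (A ∩ {p | p.1 = s}) := by
    ext y
    constructor
    · intro hy
      exact ⟨(s, y), ⟨hy, rfl⟩, rfl⟩
    · rintro ⟨⟨_, _⟩, ⟨hp, rfl⟩, rfl⟩
      exact hp
  rw [this]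
  exact (hA.inter_right (isClosed_eq continuous_fst continuous_const)).image continuous_snd

variable {F : Type*} [NormedAddCommGroup F] [NormedSpace ℝ F]

theorem Convex.prodMk_preimage {A : Set (ℝ × F)} (hA : Convex ℝ A) (s : ℝ) :
    Convex ℝ (Prod.mk s ⁻¹' A) := by
  intro x hx y hy p q hp hq hpq
  have := hA hx hy hp hq hpq
  simp only [Prod.smul_mk, Prod.mk_add_mk, smul_eq_mul, ← add_mul, hpq, one_mul] at this
  exact this

theorem smul_slice_add_smul_slice_subset {A B : Set (ℝ × F)} (l s t : ℝ) :
    (1 - l) • (Prod.mk s ⁻¹' A) + l • (Prod.mk t ⁻¹' B) ⊆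
      Prod.mk ((1 - l) * s + l * t) ⁻¹' ((1 - l) • A + l • B) := by
  rintro _ ⟨_, ⟨x, hx, rfl⟩, _, ⟨y, hy, rfl⟩, rfl⟩
  exact ⟨_, ⟨_, hx, rfl⟩, _, ⟨_, hy, rfl⟩, rfl⟩

theorem Convex.smul_add_smul_subset {E : Type*} [AddCommGroup E] [Module ℝ E] {A : Set E}
    (hA : Convex ℝ A) {l : ℝ} (hl : l ∈ Ioo (0 : ℝ) 1) : (1 - l) • A + l • A ⊆ A := by
  rintro _ ⟨_, ⟨x, hx, rfl⟩, _, ⟨y, hy, rfl⟩, rfl⟩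
  exact hA hx hy (sub_nonneg.2 hl.2.le) hl.1.le (sub_add_cancel 1 l)

theorem IsCompact.smul_add_smul {E : Type*} [NormedAddCommGroup E] [NormedSpace ℝ E]
    {A B : Set E} (hA : IsCompact A) (hB : IsCompact B) (l : ℝ) :
    IsCompact ((1 - l) • A + l • B) :=
  (hA.smul _).add (hB.smul _)

variable [MeasurableSpace F] [BorelSpace F] [FiniteDimensional ℝ F]
  {ν : Measure F} [ν.IsAddHaarMeasure]

theorem integrable_measureReal_slice {A : Set (ℝ × F)} (hA : IsCompact A) :
    Integrable (fun s => ν.real (Prod.mk s ⁻¹' A)) :=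
  Measure.integrable_measure_prodMk_left hA.measurableSet hA.measure_ne_top

theorem integral_measureReal_slice {A : Set (ℝ × F)} (hA : IsCompact A) :
    ∫ s, ν.real (Prod.mk s ⁻¹' A) = (volume.prod ν).real A := by
  have h := integral_prod (μ := volume) (ν := ν) (A.indicator fun _ => (1 : ℝ))
    ((integrable_indicator_iff hA.measurableSet).2 (integrableOn_const hA.measure_ne_top))
  rw [integral_indicator_const _ hA.measurableSet, smul_eq_mul, mul_one] at h
  rw [h]
  refine integral_congr_ae (Filter.Eventually.of_forall fun s => ?_)
  have : (fun y => A.indicator (fun _ => (1 : ℝ)) (s, y)) =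
      (Prod.mk s ⁻¹' A).indicator fun _ => 1 := rfl
  simp only [this]
  rw [integral_indicator_const _ (hA.prodMk_preimage s).measurableSet, smul_eq_mul, mul_one]

theorem integral_fst_eq_integral_slice {A : Set (ℝ × F)} (hA : IsCompact A) :
    ∫ p in A, p.1 ∂(volume.prod ν) = ∫ s, s * ν.real (Prod.mk s ⁻¹' A) := by
  have h := integral_prod (μ := volume) (ν := ν) (A.indicator fun p => p.1)
    ((integrable_indicator_iff hA.measurableSet).2
      (continuous_fst.continuousOn.integrableOn_compact hA))
  rw [integral_indicator hA.measurableSet] at h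
  rw [h]
  refine integral_congr_ae (Filter.Eventually.of_forall fun s => ?_)
  have : (fun y => A.indicator (fun p => p.1) (s, y)) =
      (Prod.mk s ⁻¹' A).indicator fun _ => s := rfl
  simp only [this]
  rw [integral_indicator_const _ (hA.prodMk_preimage s).measurableSet, smul_eq_mul, mul_comm]

theorem integrable_mul_measureReal_slice {A : Set (ℝ × F)} (hA : IsCompact A) :
    Integrable (fun s => s * ν.real (Prod.mk s ⁻¹' A)) := by
  have h := ((integrable_indicator_iff (μ := volume.prod ν) hA.measurableSet).2
      (continuous_fst.continuousOn.integrableOn_compact hA)).integral_prod_left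
  refine h.congr (Filter.Eventually.of_forall fun s => ?_)
  have : (fun y => A.indicator (fun p => p.1) (s, y)) =
      (Prod.mk s ⁻¹' A).indicator fun _ => s := rfl
  simp only [this]
  rw [integral_indicator_const _ (hA.prodMk_preimage s).measurableSet, smul_eq_mul, mul_comm]

/-- The slice volumes of a convex body form a continuous positive density on the interior of its
shadow. -/
theorem exists_slice_profile (hν : MulBrunnMinkowski ν) {A : Set (ℝ × F)} (hA : IsCompact A)
    (hconv : Convex ℝ A) (hint : (interior A).Nonempty) :
    ∃ a b : ℝ, a < b ∧ Prod.fst '' A = Icc a b ∧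
      (∀ s ∈ Ioo a b, 0 < ν.real (Prod.mk s ⁻¹' A)) ∧
      ContinuousOn (fun s => ν.real (Prod.mk s ⁻¹' A)) (Ioo a b) ∧
      (∀ s ∉ Icc a b, ν.real (Prod.mk s ⁻¹' A) = 0) ∧
      ∫ s in Ioo a b, ν.real (Prod.mk s ⁻¹' A) = (volume.prod ν).real A := by
  obtain ⟨q, hq⟩ := hint
  have hshadow : Prod.fst '' A = Icc (sInf (Prod.fst '' A)) (sSup (Prod.fst '' A)) :=
    eq_Icc_of_connected_compact
      ⟨⟨_, q, interior_subset hq, rfl⟩,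
        (hconv.linear_image (LinearMap.fst ℝ ℝ F)).isPreconnected⟩
      (hA.image continuous_fst)
  set a := sInf (Prod.fst '' A)
  set b := sSup (Prod.fst '' A)
  have hqab : q.1 ∈ Ioo a b := by
    have h1 : Prod.fst '' interior A ⊆ Icc a b := hshadow ▸ image_mono interior_subset
    have h2 := interior_maximal h1 (isOpenMap_fst _ isOpen_interior)
    rw [interior_Icc] at h2
    exact h2 ⟨q, hq, rfl⟩
  have hab : a < b := hqab.1.trans hqab.2
  obtain ⟨p₁, hp₁, hp₁a⟩ : a ∈ Prod.fst '' A := hshadow ▸ left_mem_Icc.2 hab.le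
  obtain ⟨p₂, hp₂, hp₂b⟩ : b ∈ Prod.fst '' A := hshadow ▸ right_mem_Icc.2 hab.le
  have hseg : ∀ p ∈ A, ∀ s ∈ openSegment ℝ q.1 p.1, ∃ y, (s, y) ∈ interior A := by
    rintro p hp _ ⟨x, y, hx, hy, hxy, rfl⟩
    exact ⟨x • q.2 + y • p.2,
      hconv.openSegment_interior_self_subset_interior hq hp ⟨x, y, hx, hy, hxy, rfl⟩⟩
  have hslice : ∀ s ∈ Ioo a b, ∃ y, (s, y) ∈ interior A := by
    intro s hs
    rcases lt_trichotomy s q.1 with h | h | h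
    · refine hseg p₁ hp₁ s ?_
      rw [openSegment_symm, hp₁a, openSegment_eq_Ioo (hs.1.trans h)]
      exact ⟨hs.1, h⟩
    · exact ⟨q.2, h ▸ hq⟩
    · refine hseg p₂ hp₂ s ?_
      rw [hp₂b, openSegment_eq_Ioo (h.trans hs.2)]
      exact ⟨h, hs.2⟩
  have hpos : ∀ s ∈ Ioo a b, 0 < ν.real (Prod.mk s ⁻¹' A) := by
    intro s hs
    obtain ⟨y, hy⟩ := hslice s hs
    refine ENNReal.toReal_pos (ne_of_gt ?_) (hA.prodMk_preimage s).measure_ne_top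
    refine Measure.measure_pos_of_nonempty_interior ν ⟨y, ?_⟩
    exact interior_maximal (preimage_mono interior_subset)
      (isOpen_interior.preimage (Continuous.prodMk_right s)) hy
  have hzero : ∀ s ∉ Icc a b, ν.real (Prod.mk s ⁻¹' A) = 0 := by
    intro s hs
    have : Prod.mk s ⁻¹' A = ∅ := by
      refine eq_empty_of_forall_notMem fun y hy => hs ?_
      rw [← hshadow]
      exact ⟨_, hy, rfl⟩
    rw [this, measureReal_empty]
  have hconc : ConcaveOn ℝ (Ioo a b) fun s => Real.log (ν.real (Prod.mk s ⁻¹' A)) := by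
    refine concaveOn_iff_forall_pos.2 ⟨convex_Ioo a b, fun s hs t ht x y hx hy hxy => ?_⟩
    obtain rfl : x = 1 - y := by linarith
    have hy1 : y ∈ Ioo (0 : ℝ) 1 := ⟨hy, by linarith⟩
    have h1 := hν (hA.prodMk_preimage s) (hconv.prodMk_preimage s) (hA.prodMk_preimage t)
      (hconv.prodMk_preimage t) y hy1
    have h2 : ν.real ((1 - y) • (Prod.mk s ⁻¹' A) + y • (Prod.mk t ⁻¹' A)) ≤
        ν.real (Prod.mk ((1 - y) • s + y • t) ⁻¹' A) :=
      measureReal_mono ((smul_slice_add_smul_slice_subset y s t).trans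
        (preimage_mono (hconv.smul_add_smul_subset hy1))) (hA.prodMk_preimage _).measure_ne_top
    have hsp := hpos s hs
    have htp := hpos t ht
    have h3 := Real.log_le_log (by positivity) (h1.trans h2)
    rwa [Real.log_mul (by positivity) (by positivity), Real.log_rpow hsp, Real.log_rpow htp] at h3
  refine ⟨a, b, hab, hshadow, hpos, ?_, hzero, ?_⟩
  · exact ((hconc.continuousOn isOpen_Ioo).rexp).congr fun s hs => (Real.exp_log (hpos s hs)).symm
  · rw [← integral_measureReal_slice hA, ← integral_Icc_eq_integral_Ioo]
    exact setIntegral_eq_integral_of_forall_compl_eq_zero hzero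

theorem interior_nonempty_of_measureReal_ne_zero {E : Type*} [NormedAddCommGroup E]
    [NormedSpace ℝ E] [MeasurableSpace E] [BorelSpace E] [FiniteDimensional ℝ E] {μ : Measure E}
    [μ.IsAddHaarMeasure] {A : Set E} (hA : IsCompact A) (hconv : Convex ℝ A)
    (h : μ.real A ≠ 0) : (interior A).Nonempty := by
  rw [nonempty_iff_ne_empty]
  intro he
  have h0 := hconv.addHaar_frontier μ
  rw [hA.isClosed.frontier_eq, he, sdiff_empty] at h0
  exact h (by simp [Measure.real, h0])

theorem mulBrunnMinkowski_prod (hν : MulBrunnMinkowski ν) :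
    MulBrunnMinkowski ((volume : Measure ℝ).prod ν) := by
  intro A B hA hAc hB hBc l hl
  by_cases hA0 : ((volume : Measure ℝ).prod ν).real A = 0
  · rw [hA0, Real.zero_rpow (sub_pos.2 hl.2).ne', zero_mul]
    exact measureReal_nonneg
  by_cases hB0 : ((volume : Measure ℝ).prod ν).real B = 0
  · rw [hB0, Real.zero_rpow hl.1.ne', mul_zero]
    exact measureReal_nonneg
  obtain ⟨a, b, hab, -, hApos, hAcont, -, hAint⟩ := exists_slice_profile hν hA hAc
    (interior_nonempty_of_measureReal_ne_zero hA hAc hA0)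
  obtain ⟨c, d, hcd, -, hBpos, hBcont, -, hBint⟩ := exists_slice_profile hν hB hBc
    (interior_nonempty_of_measureReal_ne_zero hB hBc hB0)
  have hM := hA.smul_add_smul hB l
  have := (prekopa_leindler_Ioo hl hab hcd hAcont hApos (integrable_measureReal_slice hA)
    hBcont hBpos (integrable_measureReal_slice hB) (fun s => measureReal_nonneg)
    (integrable_measureReal_slice (ν := ν) hM) fun s _ t _ =>
      (hν (hA.prodMk_preimage s) (hAc.prodMk_preimage s) (hB.prodMk_preimage t)
        (hBc.prodMk_preimage t) l hl).trans
      (measureReal_mono (smul_slice_add_smul_slice_subset l s t)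
        (hM.prodMk_preimage _).measure_ne_top)).1
  rwa [hAint, hBint, integral_measureReal_slice hM] at this

/-- If equality holds in the Brunn–Minkowski inequality for convex bodies of the same volume, then
their first marginals are translates of each other. -/
theorem exists_shift_fst_of_measure_smul_add_smul_le (hν : MulBrunnMinkowski ν)
    {A B : Set (ℝ × F)} (hA : IsCompact A) (hAc : Convex ℝ A) (hB : IsCompact B)
    (hBc : Convex ℝ B) (hA0 : (volume.prod ν).real A ≠ 0)
    (hAB : (volume.prod ν).real B = (volume.prod ν).real A) {l : ℝ} (hl : l ∈ Ioo (0 : ℝ) 1)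
    (hle : (volume.prod ν).real ((1 - l) • A + l • B) ≤ (volume.prod ν).real A) :
    ∃ k : ℝ, Prod.fst '' B = (fun s => s + k) '' (Prod.fst '' A) ∧
      ∫ p in B, p.1 ∂(volume.prod ν) =
        ∫ p in A, p.1 ∂(volume.prod ν) + k * (volume.prod ν).real A := by
  obtain ⟨a, b, hab, hAsh, hApos, hAcont, hAz, hAint⟩ := exists_slice_profile hν hA hAc
    (interior_nonempty_of_measureReal_ne_zero hA hAc hA0)
  obtain ⟨c, d, hcd, hBsh, hBpos, hBcont, hBz, hBint⟩ := exists_slice_profile hν hB hBc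
    (interior_nonempty_of_measureReal_ne_zero hB hBc (hAB ▸ hA0))
  have hM := hA.smul_add_smul hB l
  obtain ⟨k, hk, hfg⟩ := (prekopa_leindler_Ioo hl hab hcd hAcont hApos
    (integrable_measureReal_slice hA)
    hBcont hBpos (integrable_measureReal_slice hB) (fun s => measureReal_nonneg)
    (integrable_measureReal_slice (ν := ν) hM) fun s _ t _ =>
      (hν (hA.prodMk_preimage s) (hAc.prodMk_preimage s) (hB.prodMk_preimage t)
        (hBc.prodMk_preimage t) l hl).trans
      (measureReal_mono (smul_slice_add_smul_slice_subset l s t)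
        (hM.prodMk_preimage _).measure_ne_top)).2
    (by rw [hAint, hBint, hAB]) (by rwa [hAint, integral_measureReal_slice hM])
  have hIcc : Icc c d = (fun s => s + k) '' Icc a b := by
    rw [image_add_const_Ioo] at hk
    rw [image_add_const_Icc, ← closure_Ioo hcd.ne, hk, closure_Ioo (by linarith)]
  refine ⟨k, by rw [hBsh, hAsh, hIcc], ?_⟩
  have hae : ∀ᵐ s : ℝ, ν.real (Prod.mk (s + k) ⁻¹' B) = ν.real (Prod.mk s ⁻¹' A) := by
    have hna : ∀ᵐ s : ℝ, s ≠ a := by simp [ae_iff]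
    have hnb : ∀ᵐ s : ℝ, s ≠ b := by simp [ae_iff]
    filter_upwards [hna, hnb] with s hsa hsb
    by_cases hs : s ∈ Icc a b
    · exact hfg s ⟨lt_of_le_of_ne hs.1 hsa.symm, lt_of_le_of_ne hs.2 hsb⟩
    · rw [hAz s hs, hBz]
      rw [hIcc]
      rintro ⟨t, ht, hts⟩
      exact hs (add_right_cancel hts ▸ ht)
  rw [integral_fst_eq_integral_slice hA, integral_fst_eq_integral_slice hB,
    ← integral_add_right_eq_self _ k, ← integral_measureReal_slice hA, ← integral_const_mul,
    ← integral_add (integrable_mul_measureReal_slice hA)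
      ((integrable_measureReal_slice hA).const_mul k)]
  refine integral_congr_ae ?_
  filter_upwards [hae] with s hs
  rw [hs]
  ring

end Slices

theorem image_smul_add_smul {E E' : Type*} [AddCommGroup E] [Module ℝ E] [AddCommGroup E']
    [Module ℝ E'] (L : E →ₗ[ℝ] E')
    (l : ℝ) (A B : Set E) : L '' ((1 - l) • A + l • B) = (1 - l) • L '' A + l • L '' B := by
  rw [image_add, image_smul_set, image_smul_set]

theorem measureReal_image {E G : Type*} [NormedAddCommGroup E] [NormedSpace ℝ E]
    [MeasurableSpace E] [BorelSpace E]
    [NormedAddCommGroup G] [NormedSpace ℝ G] [MeasurableSpace G] [BorelSpace G]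
    {μ : Measure E} {η : Measure G} (L : E ≃L[ℝ] G)
    (hL : MeasurePreserving L μ η) (A : Set E) : η.real (L '' A) = μ.real A := by
  have h := hL.measure_preimage_equiv (f := L.toHomeomorph.toMeasurableEquiv) (L '' A)
  simp only [Measure.real]
  rw [← h]
  congr 2
  exact L.injective.preimage_image A

section Equality

variable {E : Type*} [NormedAddCommGroup E] [NormedSpace ℝ E] [MeasurableSpace E] [BorelSpace E]
  [FiniteDimensional ℝ E]

/-- Splitting off a linear functional as the first coordinate of a product, measure included. -/
theorem exists_measurePreserving_prod (μ : Measure E) [μ.IsAddHaarMeasure] {n : ℕ}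
    (hn : Module.finrank ℝ E = n + 1) {u : E →L[ℝ] ℝ} (hu : u ≠ 0) :
    ∃ (ν : Measure (Fin n → ℝ)) (_ : ν.IsAddHaarMeasure) (L : E ≃L[ℝ] ℝ × (Fin n → ℝ)),
      (∀ x, (L x).1 = u x) ∧ MeasurePreserving L μ (volume.prod ν) := by
  obtain ⟨e, he⟩ : ∃ e, u e = 1 := by
    obtain ⟨x, hx⟩ := DFunLike.ne_iff.1 hu
    exact ⟨(u x)⁻¹ • x, by simpa using inv_mul_cancel₀ hx⟩
  let L₁ := ContinuousLinearEquiv.equivOfRightInverse u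
    (ContinuousLinearMap.toSpanSingleton ℝ e) (fun t => by simp [he])
  have hker : Module.finrank ℝ (u : E →ₗ[ℝ] ℝ).ker = Module.finrank ℝ (Fin n → ℝ) := by
    have := L₁.toLinearEquiv.finrank_eq
    rw [hn, Module.finrank_prod, Module.finrank_self] at this
    rw [Module.finrank_fin_fun]
    omega
  let L : E ≃L[ℝ] ℝ × (Fin n → ℝ) := L₁.trans
    ((ContinuousLinearEquiv.refl ℝ ℝ).prodCongr (ContinuousLinearEquiv.ofFinrankEq hker))
  have : (μ.map L).IsAddHaarMeasure := L.isAddHaarMeasure_map μ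
  set c := (μ.map L).addHaarScalarFactor (volume.prod (volume : Measure (Fin n → ℝ)))
  have hc : c ≠ 0 := (Measure.addHaarScalarFactor_pos_of_isAddHaarMeasure _ _).ne'
  refine ⟨c • volume, Measure.IsAddHaarMeasure.nnreal_smul _ hc, L, fun x => rfl,
    L.continuous.measurable, ?_⟩
  rw [Measure.prod_smul_right]
  exact Measure.isAddLeftInvariant_eq_smul _ _

theorem mulBrunnMinkowski_pi (n : ℕ) (ν : Measure (Fin n → ℝ)) [ν.IsAddHaarMeasure] :
    MulBrunnMinkowski ν := by
  induction n with
  | zero =>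
    intro P Q _ _ _ _ l hl
    rcases P.eq_empty_or_nonempty with rfl | hP
    · rw [measureReal_empty, Real.zero_rpow (sub_pos.2 hl.2).ne', zero_mul]
      exact measureReal_nonneg
    rcases Q.eq_empty_or_nonempty with rfl | hQ
    · rw [measureReal_empty, Real.zero_rpow hl.1.ne', mul_zero]
      exact measureReal_nonneg
    have hS : ((1 - l) • P + l • Q).Nonempty := hP.smul_set.add hQ.smul_set
    rw [hP.eq_univ, hQ.eq_univ] at *
    rw [hS.eq_univ]
    rcases (measureReal_nonneg (μ := ν) (s := univ)).eq_or_lt with h | h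
    · rw [← h, Real.zero_rpow hl.1.ne', mul_zero]
    · rw [← Real.rpow_add h, sub_add_cancel, Real.rpow_one]
  | succ n ih =>
    have hu : ContinuousLinearMap.proj (R := ℝ) (φ := fun _ : Fin (n + 1) => ℝ) 0 ≠ 0 :=
      DFunLike.ne_iff.2 ⟨1, by simp⟩
    obtain ⟨η, hη, L, -, hL⟩ := exists_measurePreserving_prod ν (Module.finrank_fin_fun ℝ) hu
    intro P Q hP hPc hQ hQc l hl
    have := mulBrunnMinkowski_prod (ih η) (hP.image L.continuous)
      (hPc.linear_image L.toLinearEquiv.toLinearMap)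
      (hQ.image L.continuous) (hQc.linear_image L.toLinearEquiv.toLinearMap) l hl
    have himg := image_smul_add_smul L.toLinearEquiv.toLinearMap l P Q
    simp only [LinearEquiv.coe_coe, ContinuousLinearEquiv.coe_toLinearEquiv] at himg this
    rwa [← himg, measureReal_image L hL, measureReal_image L hL, measureReal_image L hL] at this

variable {μ : Measure E} [μ.IsAddHaarMeasure] {A B : Set E}

theorem exists_shift_functional_of_measure_smul_add_smul_le (hA : IsCompact A)
    (hAc : Convex ℝ A) (hB : IsCompact B) (hBc : Convex ℝ B) (hA0 : μ.real A ≠ 0)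
    (hAB : μ.real B = μ.real A) {l : ℝ} (hl : l ∈ Ioo (0 : ℝ) 1)
    (hle : μ.real ((1 - l) • A + l • B) ≤ μ.real A) {u : E →L[ℝ] ℝ} (hu : u ≠ 0) :
    ∃ k : ℝ, u '' B = (fun s => s + k) '' (u '' A) ∧
      ∫ x in B, u x ∂μ = ∫ x in A, u x ∂μ + k * μ.real A := by
  obtain ⟨n, hn⟩ : ∃ n, Module.finrank ℝ E = n + 1 := by
    refine Nat.exists_eq_succ_of_ne_zero fun h0 => hu ?_
    have := Module.finrank_zero_iff.1 h0
    ext x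
    rw [Subsingleton.elim x 0, map_zero, map_zero]
  obtain ⟨ν, hν, L, hLu, hL⟩ := exists_measurePreserving_prod μ hn hu
  have himg := image_smul_add_smul L.toLinearEquiv.toLinearMap l A B
  simp only [LinearEquiv.coe_coe, ContinuousLinearEquiv.coe_toLinearEquiv] at himg
  have hfst : ∀ S : Set E, Prod.fst '' (L '' S) = u '' S := fun S => by
    rw [image_image]
    exact image_congr fun x _ => hLu x
  have hemb : MeasurableEmbedding L := L.toHomeomorph.measurableEmbedding
  have hintg : ∀ S : Set E, ∫ p in L '' S, p.1 ∂(volume.prod ν) = ∫ x in S, u x ∂μ := fun S => by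
    rw [hL.setIntegral_image_emb hemb]
    simp only [hLu]
  obtain ⟨k, hk, hki⟩ := exists_shift_fst_of_measure_smul_add_smul_le (mulBrunnMinkowski_pi n ν)
    (hA.image L.continuous) (hAc.linear_image L.toLinearEquiv.toLinearMap)
    (hB.image L.continuous) (hBc.linear_image L.toLinearEquiv.toLinearMap)
    (by rwa [measureReal_image L hL]) (by rwa [measureReal_image L hL, measureReal_image L hL])
    hl (by rwa [← himg, measureReal_image L hL, measureReal_image L hL])
  rw [hfst, hfst] at hk
  rw [hintg, hintg, measureReal_image L hL] at hki
  exact ⟨k, hk, hki⟩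

/-- Equality case of the Brunn–Minkowski inequality for convex bodies of the same volume. -/
theorem exists_eq_translate_of_measure_smul_add_smul_le (hA : IsCompact A)
    (hAc : Convex ℝ A) (hB : IsCompact B) (hBc : Convex ℝ B) (hA0 : μ.real A ≠ 0)
    (hAB : μ.real B = μ.real A) {l : ℝ} (hl : l ∈ Ioo (0 : ℝ) 1)
    (hle : μ.real ((1 - l) • A + l • B) ≤ μ.real A) :
    ∃ w : E, B = (fun x => w + x) '' A := by
  set w : E := (μ.real A)⁻¹ • (∫ x in B, x ∂μ - ∫ x in A, x ∂μ) with hw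
  have hne : ∀ S : Set E, μ.real S = μ.real A → S.Nonempty := fun S hS => by
    rw [nonempty_iff_ne_empty]
    rintro rfl
    exact hA0 (by rw [← hS, measureReal_empty])
  have hshift : ∀ u : E →L[ℝ] ℝ, u '' B = (fun s => s + u w) '' (u '' A) := by
    intro u
    by_cases hu : u = 0
    · subst hu
      simp [(hne A rfl).image_const, (hne B hAB).image_const]
    obtain ⟨k, hk, hki⟩ :=
      exists_shift_functional_of_measure_smul_add_smul_le hA hAc hB hBc hA0 hAB hl hle hu
    have hint : ∀ S : Set E, IsCompact S → ∫ x in S, u x ∂μ = u (∫ x in S, x ∂μ) := fun S hS =>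
      u.integral_comp_comm (continuous_id.continuousOn.integrableOn_compact hS)
    have : u w = k := by
      rw [hw, map_smul, map_sub, ← hint A hA, ← hint B hB, hki, add_sub_cancel_left, smul_eq_mul,
        mul_comm k, inv_mul_cancel_left₀ hA0]
    rw [this, hk]
  refine ⟨w, Subset.antisymm (fun x hx => ?_) ?_⟩
  · refine ⟨x - w, ?_, add_sub_cancel w x⟩
    by_contra hxA
    obtain ⟨u, r, hur, hrx⟩ := geometric_hahn_banach_closed_point hAc hA.isClosed hxA
    obtain ⟨_, ⟨y, hy, rfl⟩, hyx⟩ : u x ∈ (fun s => s + u w) '' (u '' A) :=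
      hshift u ▸ mem_image_of_mem u hx
    have := hur y hy
    simp only [map_sub] at hyx hrx
    linarith
  · rintro _ ⟨x, hx, rfl⟩
    by_contra hxB
    obtain ⟨u, r, hur, hrx⟩ := geometric_hahn_banach_closed_point hBc hB.isClosed hxB
    obtain ⟨y, hy, hyx⟩ : u x + u w ∈ u '' B :=
      hshift u ▸ mem_image_of_mem _ (mem_image_of_mem u hx)
    have := hur y hy
    simp only [map_add] at hyx hrx
    linarith

/-- A compact subset of a convex body with at least the same volume is the whole body. -/
theorem eq_of_subset_of_measureReal_le (hA : IsCompact A) (hB : IsCompact B) (hBc : Convex ℝ B)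
    (hB0 : μ.real B ≠ 0) (hAB : A ⊆ B) (hle : μ.real B ≤ μ.real A) : A = B := by
  refine hAB.antisymm ?_
  have hBi := interior_nonempty_of_measureReal_ne_zero hB hBc hB0
  have hint : interior B ⊆ A := by
    by_contra hnot
    obtain ⟨x, hxB, hxA⟩ := not_subset.1 hnot
    have hpos : 0 < μ (interior B \ A) :=
      (isOpen_interior.sdiff hA.isClosed).measure_pos μ ⟨x, hxB, hxA⟩
    have h0 : μ (B \ A) = 0 := by
      rw [measure_sdiff hAB hA.measurableSet.nullMeasurableSet hA.measure_ne_top]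
      exact tsub_eq_zero_of_le
        ((ENNReal.toReal_le_toReal hB.measure_ne_top hA.measure_ne_top).1 hle)
    exact hpos.ne' (measure_mono_null (sdiff_subset_sdiff_left interior_subset) h0)
  calc B ⊆ closure (interior B) := by
        rw [hBc.closure_interior_eq_closure_of_nonempty_interior hBi]
        exact subset_closure
    _ ⊆ A := closure_minimal hint hA.isClosed

end Equality

/-- Equality case of Brunn–Minkowski for the concave family `t ↦ K ∩ (tv + C)`: if the
volumes are constant and positive along the segment, all intersections are translates of
`K ∩ C`, the translation depending affinely (here: linearly) on the parameter. -/
theorem stmt_17 (n : ℕ) (K C : Set (EuclideanSpace ℝ (Fin n)))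
    (hKcomp : IsCompact K) (hKconv : Convex ℝ K) (hKint : (interior K).Nonempty)
    (hCcomp : IsCompact C) (hCconv : Convex ℝ C) (hCint : (interior C).Nonempty)
    (v : EuclideanSpace ℝ (Fin n))
    (hvol : ∀ t ∈ Icc (0 : ℝ) 1,
      volume (K ∩ (fun z => t • v + z) '' C) = volume (K ∩ C))
    (hpos : ∀ t ∈ Icc (0 : ℝ) 1,
      0 < volume (K ∩ (fun z => t • v + z) '' C)) :
    ∃ w : EuclideanSpace ℝ (Fin n), ∀ t ∈ Icc (0 : ℝ) 1,
      K ∩ (fun z => t • v + z) '' C = (fun z => t • w + z) '' (K ∩ C) := by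
  set I : ℝ → Set (EuclideanSpace ℝ (Fin n)) := fun t => K ∩ (fun z => t • v + z) '' C with hI
  have hI0 : I 0 = K ∩ C := by simp [hI]
  have hcomp : ∀ t, IsCompact (I t) := fun t =>
    hKcomp.inter (hCcomp.image (continuous_const.add continuous_id))
  have hconv : ∀ t, Convex ℝ (I t) := fun t => hKconv.inter (hCconv.translate _)
  have hreal : ∀ t ∈ Icc (0 : ℝ) 1, volume.real (I t) = volume.real (I 0) := fun t ht => by
    simp only [Measure.real, hI0]
    exact congrArg _ (hvol t ht)
  have h0 : (0 : ℝ) ∈ Icc (0 : ℝ) 1 := by simp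
  have h1 : (1 : ℝ) ∈ Icc (0 : ℝ) 1 := by simp
  have hne : volume.real (I 0) ≠ 0 :=
    (ENNReal.toReal_pos (hpos 0 h0).ne' (hcomp 0).measure_ne_top).ne'
  have hsub : ∀ t ∈ Icc (0 : ℝ) 1, (1 - t) • I 0 + t • I 1 ⊆ I t := by
    rintro t ht _ ⟨_, ⟨x, ⟨hxK, x', hxC, hx⟩, rfl⟩, _, ⟨y, ⟨hyK, y', hyC, hy⟩, rfl⟩, rfl⟩
    refine ⟨hKconv hxK hyK (sub_nonneg.2 ht.2) ht.1 (sub_add_cancel 1 t),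
      (1 - t) • x' + t • y', hCconv hxC hyC (sub_nonneg.2 ht.2) ht.1 (sub_add_cancel 1 t), ?_⟩
    simp only [zero_smul, zero_add, one_smul] at hx hy
    simp only [← hx, ← hy]
    module
  have hhalf : (1 / 2 : ℝ) ∈ Icc (0 : ℝ) 1 := by norm_num
  obtain ⟨w, hw⟩ := exists_eq_translate_of_measure_smul_add_smul_le (hcomp 0) (hconv 0)
    (hcomp 1) (hconv 1) hne (hreal 1 h1) (l := 1 / 2) (by norm_num)
    ((measureReal_mono (hsub _ hhalf) (hcomp _).measure_ne_top).trans (hreal _ hhalf).le)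
  refine ⟨w, fun t ht => ?_⟩
  rw [← hI0]
  refine (eq_of_subset_of_measureReal_le (μ := volume)
    ((hcomp 0).image (continuous_const_add (t • w)))
    (hcomp t) (hconv t) (hreal t ht ▸ hne) ?_ ?_).symm
  · rintro _ ⟨x, hx, rfl⟩
    refine hsub t ht ⟨_, ⟨x, hx, rfl⟩, _, ⟨w + x, hw ▸ ⟨x, hx, rfl⟩, rfl⟩, ?_⟩
    change (1 - t) • x + t • (w + x) = t • w + x
    module
  · have : volume.real ((fun z => t • w + z) '' I 0) = volume.real (I 0) := by
      simp only [Measure.real, image_add_left, measure_preimage_add]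
    rw [this, hreal t ht]
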